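/- Let X_j be an m_j × d real matrix, X_k an m_k × d real matrix, and X_l an m_l × d real matrix, each a partial permutation matrix (all entries in {0,1}, every row sum at most 1, every column sum at most 1). Then the entrywise inequality (X_j X_kᵀ)(X_k X_lᵀ) ⪯ X_j X_lᵀ holds, i.e. every entry of X_j X_kᵀ X_k X_lᵀ is at most the corresponding entry of X_j X_lᵀ. -/

import Mathlib

open Matrix BigOperators

/-- A partial permutation matrix: all entries in {0,1}, each row sum ≤ 1,
each column sum ≤ 1. -/
def IsPartialPermMatrix {m d : ℕ} (X : Matrix (Fin m) (Fin d) ℝ) : Prop :=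
  (∀ a b, X a b = 0 ∨ X a b = 1) ∧
  (∀ a, ∑ b, X a b ≤ 1) ∧
  (∀ b, ∑ a, X a b ≤ 1)

/-! Regroup the left-hand side as `Xj * (Xkᵀ * Xk) * Xlᵀ`. A row of `Xk` has at most one entry equal
to `1`, so distinct columns of `Xk` are orthogonal and `Xkᵀ * Xk` is diagonal; its diagonal entries
are the column sums of `Xk`, hence at most `1`. Replacing `Xkᵀ * Xk` by the identity can only
increase the entries, because those of `Xj` and `Xl` are nonnegative. -/

theorem nonneg_of_eq_zero_or_one {R : Type*} [Zero R] [One R] [Preorder R] [ZeroLEOneClass R]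
    {x : R} (hx : x = 0 ∨ x = 1) : 0 ≤ x := by
  rcases hx with rfl | rfl
  exacts [le_rfl, zero_le_one]

section OrderedSemiring

variable {l m n o R : Type*} [Fintype m] [Fintype n] [Semiring R] [PartialOrder R]

section IsOrderedRing

variable [IsOrderedRing R]

theorem matrix_mul_apply_le_mul_apply_of_nonneg_left {A : Matrix l m R} {B C : Matrix m o R}
    (hA : ∀ i j, 0 ≤ A i j) (hBC : ∀ i j, B i j ≤ C i j) (i : l) (j : o) :
    (A * B) i j ≤ (A * C) i j :=
  dotProduct_le_dotProduct_of_nonneg_left (fun k => hBC k j) (hA i)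

theorem matrix_mul_apply_le_mul_apply_of_nonneg_right {A B : Matrix l m R} {C : Matrix m o R}
    (hAB : ∀ i j, A i j ≤ B i j) (hC : ∀ i j, 0 ≤ C i j) (i : l) (j : o) :
    (A * C) i j ≤ (B * C) i j :=
  dotProduct_le_dotProduct_of_nonneg_right (hAB i) (fun k => hC k j)

end IsOrderedRing

variable [IsStrictOrderedRing R]

theorem mul_eq_zero_of_sum_le_one {f : n → R} (h01 : ∀ i, f i = 0 ∨ f i = 1)
    (hsum : ∑ i, f i ≤ 1) {i j : n} (hij : i ≠ j) : f i * f j = 0 := by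
  have hpair : f i + f j ≤ 1 :=
    (Finset.add_le_sum (fun k _ => nonneg_of_eq_zero_or_one (h01 k)) (Finset.mem_univ i)
      (Finset.mem_univ j) hij).trans hsum
  rcases h01 i with hi | hi
  · rw [hi, zero_mul]
  · rcases h01 j with hj | hj
    · rw [hj, mul_zero]
    · rw [hi, hj] at hpair
      exact absurd hpair (lt_add_one 1).not_ge

theorem transpose_mul_self_apply_le_one [DecidableEq n] {X : Matrix m n R}
    (h01 : ∀ i j, X i j = 0 ∨ X i j = 1) (hrow : ∀ i, ∑ j, X i j ≤ 1)
    (hcol : ∀ j, ∑ i, X i j ≤ 1) (j k : n) : (Xᵀ * X) j k ≤ (1 : Matrix n n R) j k := by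
  simp only [mul_apply, transpose_apply]
  rcases eq_or_ne j k with rfl | hjk
  · have hsq (i : m) : X i j * X i j = X i j := by rcases h01 i j with h | h <;> simp [h]
    simpa only [hsq, one_apply_eq] using hcol j
  · have horth (i : m) : X i j * X i k = 0 := mul_eq_zero_of_sum_le_one (h01 i) (hrow i) hjk
    simp only [horth, Finset.sum_const_zero, one_apply_ne hjk, le_refl]

theorem composed_matching_le_general {A : Matrix l n R} {X : Matrix m n R} {B : Matrix o n R}
    (hA : ∀ i j, 0 ≤ A i j) (h01 : ∀ i j, X i j = 0 ∨ X i j = 1)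
    (hrow : ∀ i, ∑ j, X i j ≤ 1) (hcol : ∀ j, ∑ i, X i j ≤ 1) (hB : ∀ i j, 0 ≤ B i j)
    (a : l) (b : o) : ((A * Xᵀ) * (X * Bᵀ)) a b ≤ (A * Bᵀ) a b := by
  classical
  calc ((A * Xᵀ) * (X * Bᵀ)) a b = (A * (Xᵀ * X) * Bᵀ) a b := by simp only [Matrix.mul_assoc]
    _ ≤ (A * (1 : Matrix n n R) * Bᵀ) a b :=
        matrix_mul_apply_le_mul_apply_of_nonneg_right
          (matrix_mul_apply_le_mul_apply_of_nonneg_left hA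
            (transpose_mul_self_apply_le_one h01 hrow hcol))
          (fun i j => hB j i) a b
    _ = (A * Bᵀ) a b := by rw [Matrix.mul_one]

end OrderedSemiring

theorem IsPartialPermMatrix.nonneg {m d : ℕ} {X : Matrix (Fin m) (Fin d) ℝ}
    (hX : IsPartialPermMatrix X) (a : Fin m) (b : Fin d) : 0 ≤ X a b :=
  nonneg_of_eq_zero_or_one (hX.1 a b)

/-- Transitivity-type entrywise inequality for composed pairwise matchings
built from partial permutation matrices. -/
theorem composed_matching_le
    (mj mk ml d : ℕ)
    (Xj : Matrix (Fin mj) (Fin d) ℝ)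
    (Xk : Matrix (Fin mk) (Fin d) ℝ)
    (Xl : Matrix (Fin ml) (Fin d) ℝ)
    (hj : IsPartialPermMatrix Xj)
    (hk : IsPartialPermMatrix Xk)
    (hl : IsPartialPermMatrix Xl) :
    ∀ (a : Fin mj) (b : Fin ml),
      ((Xj * Xkᵀ) * (Xk * Xlᵀ)) a b ≤ (Xj * Xlᵀ) a b :=
  composed_matching_le_general hj.nonneg hk.1 hk.2.1 hk.2.2 hl.nonneg
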